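/- Let D be an integral domain and ⋆ a semistar operation on D. The following are equivalent: (1) D is a ⋆-Dedekind domain; (2) the Nagata ring Na(D,⋆) is a principal ideal domain; (3) Na(D,⋆) is a Dedekind domain. -/

import Mathlib

open scoped Pointwise

section SemistarDefs

variable {D : Type*} [CommRing D] [IsDomain D]
variable {K : Type*} [Field K] [Algebra D K] [IsFractionRing D K]

/-- `star` is a semistar operation on the integral domain `D` with quotient field `K`:
a map on (nonzero) `D`-submodules of `K` satisfying `(xE)^⋆ = x·E^⋆`, monotonicity,
extensivity and idempotence. -/
structure IsSemistarOperation (star : Submodule D K → Submodule D K) : Prop where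
  ne_bot : ∀ {E : Submodule D K}, E ≠ ⊥ → star E ≠ ⊥
  map_smul : ∀ (x : K), x ≠ 0 → ∀ {E : Submodule D K}, E ≠ ⊥ →
    star (Submodule.map (LinearMap.mulLeft D x) E) = Submodule.map (LinearMap.mulLeft D x) (star E)
  mono : ∀ {E F : Submodule D K}, E ≠ ⊥ → F ≠ ⊥ → E ≤ F → star E ≤ star F
  le_star : ∀ {E : Submodule D K}, E ≠ ⊥ → E ≤ star E
  star_star : ∀ {E : Submodule D K}, E ≠ ⊥ → star (star E) = star E

/-- The image in `K` of an ideal `I` of `D`, as a `D`-submodule of `K`. -/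
def idealExt (K : Type*) [Field K] [Algebra D K] (I : Ideal D) : Submodule D K :=
  Submodule.map (Algebra.linearMap D K) I

/-- `I` is a quasi-⋆-ideal: a nonzero ideal of `D` with `I = I^⋆ ∩ D`. -/
def QuasiStarIdeal (star : Submodule D K → Submodule D K) (I : Ideal D) : Prop :=
  I ≠ ⊥ ∧ Submodule.comap (Algebra.linearMap D K) (star (idealExt K I)) = I

/-- `P` is a quasi-⋆-prime: a prime ideal which is a quasi-⋆-ideal. -/
def QuasiStarPrime (star : Submodule D K → Submodule D K) (P : Ideal D) : Prop :=
  P.IsPrime ∧ QuasiStarIdeal star P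

/-- `M` is a quasi-⋆-maximal ideal: maximal in the set of proper quasi-⋆-ideals of `D`. -/
def QuasiStarMaximal (star : Submodule D K → Submodule D K) (M : Ideal D) : Prop :=
  QuasiStarIdeal star M ∧ M ≠ ⊤ ∧
    ∀ J : Ideal D, QuasiStarIdeal star J → J ≠ ⊤ → M ≤ J → J = M

/-- The finite-type semistar operation `⋆_f` associated to `⋆`:
`E^{⋆_f} = ⋃ { F^⋆ : F nonzero finitely generated, F ⊆ E }`. -/
def finTypeOp (star : Submodule D K → Submodule D K) : Submodule D K → Submodule D K :=
  fun E => ⨆ (F : Submodule D K) (_ : F ≠ ⊥) (_ : F.FG) (_ : F ≤ E), star F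

/-- The extension `E·D_Q` of a `D`-submodule `E` of `K` to the localization of `D` at
(the complement of) `Q`, described as `{ x ∈ K : s·x ∈ E for some s ∉ Q }`. -/
def extendToPrime (Q : Ideal D) (E : Submodule D K) : Submodule D K :=
  Submodule.span D {x : K | ∃ s : D, s ∉ Q ∧ algebraMap D K s * x ∈ E}

/-- The stable semistar operation of finite type `⋆̃` associated to `⋆`:
`E^⋆̃ = ⋂ { E·D_Q : Q a quasi-⋆_f-maximal ideal of D }`. -/
def stableOp (star : Submodule D K → Submodule D K) : Submodule D K → Submodule D K :=
  fun E => ⨅ (Q : Ideal D) (_ : QuasiStarMaximal (finTypeOp star) Q), extendToPrime Q E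

/-- A rank-one discrete valuation ring: a (domain which is a) local PID which is not a field. -/
def IsDVR (R : Type*) [CommRing R] : Prop :=
  ∃ h : IsDomain R, @IsDiscreteValuationRing R _ h

/-- A valuation domain. -/
def IsValuationDomain (R : Type*) [CommRing R] : Prop :=
  ∃ h : IsDomain R, @ValuationRing R _ h

/-- `D` is a ⋆-almost Dedekind domain: `D_M` is a rank-one discrete valuation ring for
every quasi-⋆_f-maximal ideal `M` of `D`. -/
def StarADD (star : Submodule D K → Submodule D K) : Prop :=
  ∀ (M : Ideal D) [M.IsPrime], QuasiStarMaximal (finTypeOp star) M →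
    IsDVR (Localization.AtPrime M)

/-- `D` is a Prüfer ⋆-multiplication domain: `D_M` is a valuation domain for every
quasi-⋆_f-maximal ideal `M` of `D`. -/
def StarPMD (star : Submodule D K → Submodule D K) : Prop :=
  ∀ (M : Ideal D) [M.IsPrime], QuasiStarMaximal (finTypeOp star) M →
    IsValuationDomain (Localization.AtPrime M)

/-- `D` is ⋆-Noetherian: ascending chain condition on quasi-⋆-ideals. -/
def StarNoetherian (star : Submodule D K → Submodule D K) : Prop :=
  ∀ c : ℕ →o Ideal D, (∀ n, QuasiStarIdeal star (c n)) → ∃ n, ∀ m, n ≤ m → c m = c n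

/-- `D` is a ⋆-Dedekind domain: ⋆-Noetherian and a P⋆MD. -/
def StarDedekind (star : Submodule D K → Submodule D K) : Prop :=
  StarNoetherian star ∧ StarPMD star

/-- `D` has the ⋆_f-finite character property: every nonzero element of `D` lies in only
finitely many quasi-⋆_f-maximal ideals. -/
def StarFiniteCharacter (star : Submodule D K → Submodule D K) : Prop :=
  ∀ d : D, d ≠ 0 → {M : Ideal D | QuasiStarMaximal (finTypeOp star) M ∧ d ∈ M}.Finite

/-- The `v`-operation `E ↦ (D : (D : E))`. -/
def vOp : Submodule D K → Submodule D K := fun E => 1 / (1 / E)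

/-- A nonzero `D`-submodule `E` of `K` is quasi-∗-invertible if `(E·(D^∗ : E))^∗ = D^∗`. -/
def QuasiStarInvertible (star : Submodule D K → Submodule D K) (E : Submodule D K) : Prop :=
  star (E * (star 1 / E)) = star (1 : Submodule D K)

/-- `D` has the ∗-cancellation law: for nonzero fractional ideals `A`, `B`, `C`,
`(AB)^∗ = (AC)^∗` implies `B^∗ = C^∗`. -/
def StarCancellation (star : Submodule D K → Submodule D K) : Prop :=
  ∀ A B C : Submodule D K, A ≠ ⊥ → B ≠ ⊥ → C ≠ ⊥ →
    IsFractional (nonZeroDivisors D) A → IsFractional (nonZeroDivisors D) B →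
    IsFractional (nonZeroDivisors D) C →
    star (A * B) = star (A * C) → star B = star C

/-- The ∗-dimension of `D`: the supremum of the lengths of chains of quasi-∗-prime ideals
of `D` (between `(0)` and a quasi-∗-prime). -/
noncomputable def starDim (star : Submodule D K → Submodule D K) : ℕ∞ :=
  ⨆ (k : ℕ) (_ : ∃ c : Fin k → Ideal D, StrictMono c ∧ ∀ i, QuasiStarPrime star (c i)),
    (k : ℕ∞)

/-- A submodule `T` of `K` (containing the image of an integral domain with quotient
field `K`) is integrally closed (in `K`) if every `x ∈ K` satisfying a monic polynomial
equation with coefficients in `T` belongs to `T`. -/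
def IntegrallyClosedSub (T : Submodule D K) : Prop :=
  ∀ x : K, (∃ (n : ℕ) (c : Fin n → K), (∀ i, c i ∈ T) ∧
    x ^ n = ∑ i : Fin n, c i * x ^ (i : ℕ)) → x ∈ T

/-- The content ideal `c(p)` of a polynomial: the ideal generated by its coefficients. -/
def contentIdeal (p : Polynomial D) : Ideal D := Ideal.span (Set.range p.coeff)

/-- The multiplicative set `N(⋆) = { h ∈ D[X] : h ≠ 0, c(h)^⋆ = D^⋆ }` (as a submonoid,
via the closure of this multiplicatively closed set). -/
noncomputable def nagataMonoid (star : Submodule D K → Submodule D K) : Submonoid (Polynomial D) :=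
  Submonoid.closure
    {p : Polynomial D | p ≠ 0 ∧ star (idealExt K (contentIdeal p)) = star (1 : Submodule D K)}

/-- The Nagata ring `Na(D,⋆) = D[X]_{N(⋆)}`. -/
abbrev NagataRing (star : Submodule D K → Submodule D K) :=
  Localization (nagataMonoid star)

/-- `V` is a valuation overring of `D` (inside the quotient field `K`): `D ⊆ V ⊆ K` and
for every nonzero `x ∈ K`, `x ∈ V` or `x⁻¹ ∈ V`. -/
def IsValuationOverring (D : Type*) [CommRing D] {K : Type*} [Field K] [Algebra D K]
    (V : Subring K) : Prop :=
  (∀ d : D, algebraMap D K d ∈ V) ∧ ∀ x : K, x ≠ 0 → (x ∈ V ∨ x⁻¹ ∈ V)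

/-- `V` is a ∗-valuation overring of `D`: a valuation overring such that `F^∗ ⊆ FV` for
every nonzero finitely generated `D`-submodule `F` of `K`. -/
def IsStarValuationOverring (star : Submodule D K → Submodule D K) (V : Subring K) : Prop :=
  IsValuationOverring D V ∧
    ∀ F : Submodule D K, F ≠ ⊥ → F.FG →
      star F ≤ Submodule.span D ((F : Set K) * (V : Set K))

/-- `D` is a Krull domain: there is a family of rank-one discrete valuation overrings of `D`
with quotient field `K` whose intersection is `D`, with finite character. -/
def IsKrullDomain (D : Type*) [CommRing D] (K : Type*) [Field K] [Algebra D K] : Prop :=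
  ∃ 𝒱 : Set (Subring K),
    (∀ V ∈ 𝒱, (∀ d : D, algebraMap D K d ∈ V) ∧ IsDVR V ∧
      ∀ x : K, ∃ a ∈ V, ∃ b ∈ V, b ≠ 0 ∧ x * b = a) ∧
    (⋂ V ∈ 𝒱, (V : Set K)) = Set.range (algebraMap D K) ∧
    ∀ d : D, d ≠ 0 → {V ∈ 𝒱 | ¬ ∃ y ∈ V, algebraMap D K d * y = 1}.Finite

end SemistarDefs

section Helpers

set_option linter.unusedSectionVars false

variable {D : Type*} [CommRing D] [IsDomain D]
variable {K : Type*} [Field K] [Algebra D K] [IsFractionRing D K]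

def clI (star : Submodule D K → Submodule D K) (I : Ideal D) : Ideal D :=
  Submodule.comap (Algebra.linearMap D K) (star (idealExt K I))

lemma algLin_inj : Function.Injective (Algebra.linearMap D K) :=
  IsFractionRing.injective D K

lemma fg_dir {F : Ideal D} (hF : F.FG) (s : Set (Ideal D)) (hn : s.Nonempty)
    (hd : DirectedOn (fun x1 x2 => x1 ≤ x2) s) (hle : F ≤ sSup s) : ∃ x ∈ s, F ≤ x :=
  (CompleteLattice.isCompactElement_iff_le_of_directed_sSup_le _ F).1
    ((Submodule.fg_iff_compact F).1 hF) s hn hd hle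

lemma idealExt_ne_bot {I : Ideal D} (h : I ≠ ⊥) : idealExt K I ≠ ⊥ := by
  intro h'
  apply h
  apply Submodule.map_injective_of_injective (algLin_inj (D := D) (K := K))
  rw [Submodule.map_bot]
  exact h'

lemma idealExt_mono {I J : Ideal D} (h : I ≤ J) : idealExt K I ≤ idealExt K J :=
  Submodule.map_mono h

lemma mem_clI {star : Submodule D K → Submodule D K} {I : Ideal D} {x : D} :
    x ∈ clI star I ↔ algebraMap D K x ∈ star (idealExt K I) := Iff.rfl

variable {star : Submodule D K → Submodule D K} (hs : IsSemistarOperation star)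
include hs

lemma clI_le {I : Ideal D} (h : I ≠ ⊥) : I ≤ clI star I := by
  intro x hx
  exact hs.le_star (idealExt_ne_bot h) (Submodule.mem_map_of_mem hx)

lemma clI_mono {I J : Ideal D} (h : I ≠ ⊥) (hIJ : I ≤ J) : clI star I ≤ clI star J := by
  have hJ : J ≠ ⊥ := ne_bot_of_le_ne_bot h hIJ
  exact Submodule.comap_mono (hs.mono (idealExt_ne_bot h) (idealExt_ne_bot hJ) (idealExt_mono hIJ))

lemma clI_le_of_le {I J : Ideal D} (h : J ≠ ⊥) (hI : I ≠ ⊥) (hIJ : J ≤ clI star I) :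
    clI star J ≤ clI star I := by
  have h1 : idealExt K J ≤ star (idealExt K I) := Submodule.map_le_iff_le_comap.2 hIJ
  have h2 := hs.mono (idealExt_ne_bot h) (hs.ne_bot (idealExt_ne_bot hI)) h1
  rw [hs.star_star (idealExt_ne_bot hI)] at h2
  exact Submodule.comap_mono h2

lemma clI_scale {I J : Ideal D} (h : I ≠ ⊥) {d y z u : D} (hd : d ≠ 0) (hy : y ≠ 0)
    (hz : z ∈ clI star I) (hIJ : ∀ x ∈ I, ∃ w ∈ J, d * x = y * w) (hu : d * z = y * u) :
    u ∈ clI star J := by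
  have hyK : algebraMap D K y ≠ 0 := by simpa using hy
  have hdK : algebraMap D K d ≠ 0 := by simpa using hd
  set e : K := algebraMap D K d / algebraMap D K y with he
  have he0 : e ≠ 0 := div_ne_zero hdK hyK
  have key : ∀ a b : D, d * a = y * b → e * algebraMap D K a = algebraMap D K b := by
    intro a b hab
    have := congrArg (algebraMap D K) hab
    rw [map_mul, map_mul] at this
    rw [he]; field_simp; exact this
  have hle : Submodule.map (LinearMap.mulLeft D e) (idealExt K I) ≤ idealExt K J := by
    rintro _ ⟨_, ⟨x, hx, rfl⟩, rfl⟩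
    obtain ⟨w, hw, hxw⟩ := hIJ x hx
    exact ⟨w, hw, (key x w hxw).symm⟩
  have hne : Submodule.map (LinearMap.mulLeft D e) (idealExt K I) ≠ ⊥ := by
    intro h'
    apply idealExt_ne_bot (K := K) h
    apply Submodule.map_injective_of_injective
      (f := LinearMap.mulLeft D e) (mul_right_injective₀ he0)
    rw [Submodule.map_bot]
    exact h'
  have hle2 := hs.mono hne (ne_bot_of_le_ne_bot hne hle) hle
  rw [hs.map_smul e he0 (idealExt_ne_bot h)] at hle2
  exact hle2 ⟨algebraMap D K z, hz, key z u hu⟩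

lemma clI_one_iff {I : Ideal D} (h : I ≠ ⊥) :
    star (idealExt K I) = star (1 : Submodule D K) ↔ (1 : D) ∈ clI star I := by
  rw [mem_clI, map_one]
  have h1 : (1 : Submodule D K) ≠ ⊥ := one_ne_zero
  constructor
  · intro h2
    rw [h2]
    exact hs.le_star h1 (Submodule.mem_one.2 ⟨1, map_one _⟩)
  · intro h2
    apply le_antisymm
    · apply hs.mono (idealExt_ne_bot h) h1
      rintro _ ⟨x, hx, rfl⟩
      exact Submodule.mem_one.2 ⟨x, rfl⟩
    · have := hs.mono h1 (hs.ne_bot (idealExt_ne_bot h)) (Submodule.one_le.2 h2)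
      rwa [hs.star_star (idealExt_ne_bot h)] at this

lemma mem_clf {I : Ideal D} (h : I ≠ ⊥) {x : D} :
    x ∈ clI (finTypeOp star) I ↔ ∃ F : Ideal D, F ≠ ⊥ ∧ F.FG ∧ F ≤ I ∧ x ∈ clI star F := by
  rw [mem_clI]
  have hE := idealExt_ne_bot (K := K) h
  constructor
  · intro hx
    have e1 : finTypeOp star (idealExt K I) =
      ⨆ F : {F : Submodule D K // F ≠ ⊥ ∧ F.FG ∧ F ≤ idealExt K I}, star F.1 := by
      simp only [finTypeOp, iSup_subtype, iSup_and]
    rw [e1] at hx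
    have : Nonempty {F : Submodule D K // F ≠ ⊥ ∧ F.FG ∧ F ≤ idealExt K I} := by
      obtain ⟨y, hy, hy0⟩ := Submodule.exists_mem_ne_zero_of_ne_bot hE
      exact ⟨⟨Submodule.span D {y}, by simpa using hy0, Submodule.fg_span_singleton y,
        by simpa using hy⟩⟩
    rw [Submodule.mem_iSup_of_directed] at hx
    · obtain ⟨⟨F, hF0, hF, hFE⟩, hx⟩ := hx
      have e2 : idealExt K (Submodule.comap (Algebra.linearMap D K) F) = F := by
        apply Submodule.map_comap_eq_self
        exact hFE.trans (LinearMap.map_le_range)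
      refine ⟨Submodule.comap (Algebra.linearMap D K) F, ?_, ?_, ?_, ?_⟩
      · intro h0
        rw [h0] at e2
        apply hF0
        rw [← e2]; exact Submodule.map_bot _
      · apply Submodule.fg_of_fg_map_injective (Algebra.linearMap D K) algLin_inj
        change (idealExt K _).FG
        rw [e2]; exact hF
      · intro y hy
        obtain ⟨z, hz, hzy⟩ := hFE hy
        rwa [← algLin_inj hzy]
      · rw [mem_clI, e2]; exact hx
    · rintro ⟨F, hF0, hF, hFE⟩ ⟨G, hG0, hG, hGE⟩
      have h0 : F ⊔ G ≠ ⊥ := ne_bot_of_le_ne_bot hF0 le_sup_left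
      exact ⟨⟨F ⊔ G, h0, hF.sup hG, sup_le hFE hGE⟩,
        hs.mono hF0 h0 le_sup_left, hs.mono hG0 h0 le_sup_right⟩
  · rintro ⟨F, hF0, hF, hFI, hx⟩
    have : star (idealExt K F) ≤ finTypeOp star (idealExt K I) := by
      unfold finTypeOp
      exact le_iSup_of_le (idealExt K F) (le_iSup_of_le (idealExt_ne_bot hF0)
        (le_iSup_of_le (Submodule.FG.map _ hF) (le_iSup_of_le (idealExt_mono hFI) le_rfl)))
    exact this hx

lemma clf_fg {I F : Ideal D} (h : I ≠ ⊥) (hF : F.FG) (hFI : F ≤ clI (finTypeOp star) I) :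
    ∃ G : Ideal D, G ≠ ⊥ ∧ G.FG ∧ G ≤ I ∧ F ≤ clI star G := by
  induction F, hF using Submodule.fg_induction with
  | singleton x =>
    obtain ⟨G, h0, h1, h2, h3⟩ := (mem_clf hs h).1 (hFI (Submodule.mem_span_singleton_self x))
    exact ⟨G, h0, h1, h2, by simpa using h3⟩
  | sup N₁ N₂ hN₁ hN₂ ih1 ih2 =>
    obtain ⟨G, h0, h1, h2, h3⟩ := ih1 (le_sup_left.trans hFI)
    obtain ⟨G', h0', h1', h2', h3'⟩ := ih2 (le_sup_right.trans hFI)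
    exact ⟨G ⊔ G', ne_bot_of_le_ne_bot h0 le_sup_left, Submodule.FG.sup h1 h1', sup_le h2 h2',
      sup_le (h3.trans (clI_mono hs h0 le_sup_left)) (h3'.trans (clI_mono hs h0' le_sup_right))⟩

lemma le_clf {I : Ideal D} (h : I ≠ ⊥) : I ≤ clI (finTypeOp star) I := by
  intro x hx
  rw [mem_clf hs h]
  obtain ⟨y, hy, hy0⟩ := Submodule.exists_mem_ne_zero_of_ne_bot h
  have h0 : Ideal.span {x, y} ≠ ⊥ := by
    intro h0
    apply hy0
    have : y ∈ Ideal.span {x, y} := Ideal.subset_span (by simp)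
    rw [h0] at this
    simpa using this
  refine ⟨Ideal.span {x, y}, h0, Submodule.fg_span (by simp), ?_, clI_le hs h0
    (Ideal.subset_span (by simp))⟩
  rw [Ideal.span_le]
  rintro z (rfl | rfl) <;> assumption

lemma clf_clf {I : Ideal D} (h : I ≠ ⊥) :
    clI (finTypeOp star) (clI (finTypeOp star) I) = clI (finTypeOp star) I := by
  have h' := ne_bot_of_le_ne_bot h (le_clf hs h)
  apply le_antisymm _ (le_clf hs h')
  intro x hx
  obtain ⟨F, hF0, hF, hFI, hx⟩ := (mem_clf hs h').1 hx
  obtain ⟨G, h0, h1, h2, h3⟩ := clf_fg hs h hF hFI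
  exact (mem_clf hs h).2 ⟨G, h0, h1, h2, clI_le_of_le hs hF0 h0 h3 hx⟩

lemma exists_max {I : Ideal D} (h : I ≠ ⊥) (h1 : (1 : D) ∉ clI (finTypeOp star) I) :
    ∃ M : Ideal D, I ≤ M ∧ QuasiStarMaximal (finTypeOp star) M := by
  obtain ⟨M, hIM, hM⟩ := zorn_le_nonempty₀
    {J : Ideal D | J ≠ ⊥ ∧ (1 : D) ∉ clI (finTypeOp star) J} (by
      intro c hc hch y hy
      have h0 : sSup c ≠ ⊥ := ne_bot_of_le_ne_bot (hc hy).1 (le_sSup hy)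
      refine ⟨sSup c, ⟨h0, ?_⟩, fun z hz => le_sSup hz⟩
      intro h1
      obtain ⟨F, hF0, hF, hFI, hx⟩ := (mem_clf hs h0).1 h1
      obtain ⟨z, hz, hFz⟩ := fg_dir hF c ⟨y, hy⟩ hch.directedOn hFI
      exact (hc hz).2 ((mem_clf hs (hc hz).1).2 ⟨F, hF0, hF, hFz, hx⟩)) I ⟨h, h1⟩
  refine ⟨M, hIM, ⟨hM.1.1, ?_⟩, ?_, ?_⟩
  · change clI (finTypeOp star) M = M
    have h2 := le_clf hs hM.1.1
    refine le_antisymm (hM.2 ⟨ne_bot_of_le_ne_bot hM.1.1 h2, ?_⟩ h2) h2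
    rw [clf_clf hs hM.1.1]
    exact hM.1.2
  · rintro rfl
    exact hM.1.2 (le_clf hs hM.1.1 trivial)
  · rintro J ⟨hJ0, hJ⟩ hJt hMJ
    refine le_antisymm (hM.2 ⟨hJ0, ?_⟩ hMJ) hMJ
    change clI (finTypeOp star) J = J at hJ
    rw [hJ]
    exact fun h => hJt ((Ideal.eq_top_iff_one _).2 h)

lemma max_prime {M : Ideal D} (hM : QuasiStarMaximal (finTypeOp star) M) : M.IsPrime := by
  obtain ⟨⟨h0, hcl⟩, ht, hmax⟩ := hM
  change clI (finTypeOp star) M = M at hcl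
  refine ⟨ht, ?_⟩
  intro a b hab
  by_contra hcon
  push Not at hcon
  obtain ⟨ha, hb⟩ := hcon
  set J := M ⊔ Ideal.span {a} with hJ
  have hJ0 : J ≠ ⊥ := ne_bot_of_le_ne_bot h0 le_sup_left
  have hle := le_clf hs hJ0
  have h1 : (1 : D) ∈ clI (finTypeOp star) J := by
    rw [← Ideal.eq_top_iff_one]
    by_contra hne
    have := hmax (clI (finTypeOp star) J) ⟨ne_bot_of_le_ne_bot hJ0 hle, clf_clf hs hJ0⟩ hne
      (le_sup_left.trans hle)
    apply ha
    rw [← this]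
    exact hle (Ideal.mem_sup_right (Ideal.mem_span_singleton_self a))
  obtain ⟨F, hF0, hF, hFJ, h1⟩ := (mem_clf hs hJ0).1 h1
  have hb0 : b ≠ 0 := by rintro rfl; exact hb M.zero_mem
  have hbF : ∀ x ∈ F, b * x ∈ Ideal.span {b} * F := fun x hx =>
    Ideal.mul_mem_mul (Ideal.mem_span_singleton_self b) hx
  apply hb
  rw [← hcl, mem_clf hs h0]
  refine ⟨Ideal.span {b} * F, ?_, (Submodule.fg_span_singleton b).mul hF, ?_, ?_⟩
  · simp [hF0, hb0]
  · rw [Ideal.span_singleton_mul_le_iff]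
    intro x hx
    obtain ⟨m, hm, n, hn, rfl⟩ := Submodule.mem_sup.1 (hFJ hx)
    obtain ⟨c, rfl⟩ := Ideal.mem_span_singleton.1 hn
    rw [mul_add]
    refine M.add_mem (M.mul_mem_left _ hm) ?_
    rw [show b * (a * c) = c * (a * b) by ring]
    exact M.mul_mem_left _ hab
  · exact clI_scale hs hF0 (d := b) (y := 1) (z := 1) hb0 one_ne_zero h1
      (fun x hx => ⟨b * x, hbF x hx, (one_mul _).symm⟩) (by ring)

omit hs in
lemma coeff_mem_content (p : Polynomial D) (i : ℕ) : p.coeff i ∈ contentIdeal p :=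
  Ideal.subset_span ⟨i, rfl⟩

omit hs in
lemma content_le {p : Polynomial D} {I : Ideal D} :
    contentIdeal p ≤ I ↔ ∀ i, p.coeff i ∈ I := by
  rw [contentIdeal, Ideal.span_le]
  simp [Set.range_subset_iff]

omit hs in
lemma content_fg (p : Polynomial D) : (contentIdeal p).FG := by
  have : contentIdeal p = Ideal.span (p.coeff '' p.support) := by
    apply le_antisymm
    · rw [content_le]
      intro i
      by_cases h : p.coeff i = 0
      · rw [h]; exact Ideal.zero_mem _
      · exact Ideal.subset_span ⟨i, by simpa using h, rfl⟩
    · rw [Ideal.span_le]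
      rintro _ ⟨i, -, rfl⟩
      exact coeff_mem_content p i
  rw [this]
  exact Submodule.fg_span (p.support.finite_toSet.image _)

omit hs in
lemma content_ne_bot {p : Polynomial D} (hp : p ≠ 0) : contentIdeal p ≠ ⊥ := by
  intro h
  apply hp
  ext i
  have := coeff_mem_content p i
  rw [h] at this
  simpa using this

lemma max_one_notMem {M : Ideal D} (hM : QuasiStarMaximal (finTypeOp star) M) :
    ∀ F : Ideal D, F ≠ ⊥ → F.FG → (1 : D) ∈ clI star F → ¬ F ≤ M := by
  intro F hF0 hF h1 hFM
  obtain ⟨⟨h0, hcl⟩, ht, hmax⟩ := hM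
  change clI (finTypeOp star) M = M at hcl
  apply ht
  rw [Ideal.eq_top_iff_one, ← hcl, mem_clf hs h0]
  exact ⟨F, hF0, hF, hFM, h1⟩

lemma nagata_notMem {M : Ideal D} (hM : QuasiStarMaximal (finTypeOp star) M)
    {h : Polynomial D} (hh : h ∈ nagataMonoid star) : h ∉ Ideal.map Polynomial.C M := by
  have := max_prime hs hM
  have hp : (Ideal.map (Polynomial.C : D →+* _) M).IsPrime := Ideal.isPrime_map_C_of_isPrime
  have : nagataMonoid star ≤ (Ideal.map (Polynomial.C : D →+* _) M).primeCompl := by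
    rw [nagataMonoid, Submonoid.closure_le]
    rintro p ⟨hp0, hp1⟩
    rw [clI_one_iff hs (content_ne_bot hp0)] at hp1
    intro hpM
    rw [SetLike.mem_coe, Ideal.mem_map_C_iff] at hpM
    exact max_one_notMem hs hM _ (content_ne_bot hp0) (content_fg p) hp1 (content_le.2 hpM)
  exact this hh

omit hs in
lemma nagata_le : nagataMonoid star ≤ nonZeroDivisors (Polynomial D) := by
  rw [nagataMonoid, Submonoid.closure_le]
  rintro p ⟨hp0, hp1⟩
  exact mem_nonZeroDivisors_of_ne_zero hp0

lemma nagata_mem {h : Polynomial D} (hh : h ≠ 0) (h1 : (1 : D) ∈ clI star (contentIdeal h)) :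
    h ∈ nagataMonoid star :=
  Submonoid.subset_closure ⟨hh, (clI_one_iff hs (content_ne_bot hh)).2 h1⟩

lemma nagata_one {h : Polynomial D} (hh : h ∈ nagataMonoid star) :
    (1 : D) ∈ clI star (contentIdeal h) := by
  have h0 : h ≠ 0 := nonZeroDivisors.ne_zero (nagata_le hh)
  by_contra hcon
  obtain ⟨M, hIM, hM⟩ := exists_max hs (content_ne_bot h0) (by
    intro hc
    obtain ⟨F, hF0, hF, hFI, h1⟩ := (mem_clf hs (content_ne_bot h0)).1 hc
    exact hcon (clI_mono hs hF0 hFI h1))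
  apply nagata_notMem hs hM hh
  rw [Ideal.mem_map_C_iff]
  exact content_le.1 hIM

omit hs in
lemma exists_content (A : Ideal (Polynomial D)) {F : Ideal D} (hF : F.FG)
    (hFA : F ≤ ⨆ f : A, contentIdeal (f : Polynomial D)) :
    ∃ f ∈ A, F ≤ contentIdeal f := by
  obtain ⟨_, ⟨f, rfl⟩, hf⟩ := fg_dir hF (Set.range fun f : A => contentIdeal (f : Polynomial D))
    ⟨_, 0, rfl⟩ (by
      rintro _ ⟨f, rfl⟩ _ ⟨g, rfl⟩
      refine ⟨_, ⟨f + ⟨Polynomial.X ^ (f.1.natDegree + 1) * g.1, A.mul_mem_left _ g.2⟩, rfl⟩,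
        ?_, ?_⟩
      · beta_reduce
        rw [content_le]
        intro i
        by_cases hi : i < f.1.natDegree + 1
        · convert coeff_mem_content _ i using 1
          · simp [Polynomial.coeff_X_pow_mul']
            omega
          · infer_instance
        · rw [Polynomial.coeff_eq_zero_of_natDegree_lt (by omega)]
          exact Ideal.zero_mem _
      · beta_reduce
        rw [content_le]
        intro i
        convert coeff_mem_content _ (i + (f.1.natDegree + 1)) using 1
        · simp only [Submodule.coe_add, Polynomial.coeff_add, Polynomial.coeff_X_pow_mul]
          rw [Polynomial.coeff_eq_zero_of_natDegree_lt (p := f.1) (by omega), zero_add]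
        · infer_instance) hFA
  exact ⟨f.1, f.2, hf⟩


omit hs in
lemma val_iff (M : Ideal D) [M.IsPrime] : IsValuationDomain (Localization.AtPrime M) ↔
    ∀ a b : D, (∃ s, s ∉ M ∧ a ∣ s * b) ∨ (∃ s, s ∉ M ∧ b ∣ s * a) := by
  have hinj : Function.Injective (algebraMap D (Localization.AtPrime M)) :=
    IsLocalization.injective _ M.primeCompl_le_nonZeroDivisors
  have key : ∀ a b : D, algebraMap D (Localization.AtPrime M) a ∣ algebraMap D _ b ↔
      ∃ s, s ∉ M ∧ a ∣ s * b := by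
    intro a b
    constructor
    · rintro ⟨z, hz⟩
      obtain ⟨⟨c, s⟩, hc⟩ := IsLocalization.surj M.primeCompl z
      refine ⟨s, s.2, c, ?_⟩
      apply hinj
      simp only at hc
      rw [map_mul, map_mul, ← hc, hz]
      ring
    · rintro ⟨s, hs, c, hc⟩
      have hu : IsUnit (algebraMap D (Localization.AtPrime M) s) :=
        IsLocalization.map_units _ (⟨s, hs⟩ : M.primeCompl)
      have : algebraMap D (Localization.AtPrime M) a ∣ algebraMap D _ s * algebraMap D _ b := by
        rw [← map_mul, hc, map_mul]; exact dvd_mul_right _ _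
      exact (hu.dvd_mul_left).1 this
  constructor
  · rintro ⟨h1, h2⟩ a b
    rw [← key, ← key]
    exact ValuationRing.dvd_total _ _
  · intro h
    refine ⟨inferInstance, ValuationRing.iff_dvd_total.2 ⟨fun x y => ?_⟩⟩
    obtain ⟨⟨a, s⟩, ha⟩ := IsLocalization.surj M.primeCompl x
    obtain ⟨⟨b, t⟩, hb⟩ := IsLocalization.surj M.primeCompl y
    have hu := IsLocalization.map_units (Localization.AtPrime M) s
    have hv := IsLocalization.map_units (Localization.AtPrime M) t
    rw [← hu.mul_right_dvd, ← hu.dvd_mul_right (a := y), ← hv.dvd_mul_right (b := y),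
      ← hv.mul_right_dvd (a := y)]
    simp only at ha hb
    rw [ha, hb, key, key]
    exact h a b

omit hs in
lemma val_min {M : Ideal D} [M.IsPrime]
    (hV : ∀ a b : D, (∃ s, s ∉ M ∧ a ∣ s * b) ∨ (∃ s, s ∉ M ∧ b ∣ s * a))
    {ι : Type*} (T : Finset ι) (hT : T.Nonempty) (c : ι → D) :
    ∃ i ∈ T, ∃ s, s ∉ M ∧ ∀ j ∈ T, c i ∣ s * c j := by
  classical
  induction hT using Finset.Nonempty.cons_induction with
  | singleton a => exact ⟨a, by simp, 1, (Ideal.ne_top_iff_one M).1 (Ideal.IsPrime.ne_top ‹_›),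
      by simp⟩
  | cons a T ha hT ih =>
    obtain ⟨i, hi, s, hsM, hs⟩ := ih
    have hm : ∀ {s t : D}, s ∉ M → t ∉ M → s * t ∉ M := fun h1 h2 h =>
      ((Ideal.IsPrime.mem_or_mem ‹_› h).elim h1 h2)
    rcases hV (c i) (c a) with ⟨t, htM, ht⟩ | ⟨t, htM, ht⟩
    · refine ⟨i, by simp [hi], s * t, hm hsM htM, ?_⟩
      intro j hj
      rcases Finset.mem_cons.1 hj with rfl | hj
      · rw [mul_assoc]; exact ht.mul_left _
      · rw [show s * t * c j = t * (s * c j) by ring]; exact (hs j hj).mul_left _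
    · refine ⟨a, by simp, s * t, hm hsM htM, ?_⟩
      intro j hj
      rcases Finset.mem_cons.1 hj with rfl | hj
      · exact dvd_mul_left _ _
      · rw [show s * t * c j = t * (s * c j) by ring]
        exact ht.trans (mul_dvd_mul_left t (hs j hj))

omit hs in
lemma dvd_poly {M : Ideal D} [M.IsPrime] {a : D} (g : Polynomial D)
    (h : ∀ i, ∃ t, t ∉ M ∧ a ∣ t * g.coeff i) :
    ∃ t, t ∉ M ∧ Polynomial.C a ∣ Polynomial.C t * g := by
  choose t ht h using h
  refine ⟨∏ i ∈ g.support, t i, ?_, ?_⟩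
  · intro hp
    obtain ⟨i, -, hi⟩ := (Ideal.IsPrime.prod_mem_iff (p := M)).1 hp
    exact ht i hi
  · rw [Polynomial.C_dvd_iff_dvd_coeff]
    intro i
    rw [Polynomial.coeff_C_mul]
    by_cases hi : i ∈ g.support
    · exact (h i).trans (mul_dvd_mul_right (Finset.dvd_prod_of_mem t hi) _)
    · rw [Polynomial.notMem_support_iff.1 hi]; simp

lemma local_dvd {M : Ideal D} (hM : QuasiStarMaximal (finTypeOp star) M)
    (hP : StarPMD star) {f g : Polynomial D} (hf : f ≠ 0)
    (hfg : contentIdeal g ≤ clI star (contentIdeal f)) :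
    ∃ h, h ∉ Ideal.map Polynomial.C M ∧ f ∣ h * g := by
  have hMp := max_prime hs hM
  have hV := (val_iff M).1 (hP M hM)
  have hm : ∀ {s t : D}, s ∉ M → t ∉ M → s * t ∉ M := fun h1 h2 h =>
      ((Ideal.IsPrime.mem_or_mem ‹_› h).elim h1 h2)
  obtain ⟨i, hi, s, hsM, hdv⟩ := val_min hV f.support (by simpa using hf) f.coeff
  have hdv' : ∀ j, f.coeff i ∣ s * f.coeff j := by
    intro j
    by_cases hj : j ∈ f.support
    · exact hdv j hj
    · rw [Polynomial.notMem_support_iff.1 hj]; simp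
  have ha0 : f.coeff i ≠ 0 := by simpa using hi
  set a := f.coeff i with ha
  have hdvc : ∀ x ∈ contentIdeal f, a ∣ s * x := by
    intro x hx
    refine Submodule.span_induction (p := fun x _ => a ∣ s * x) ?_ ?_ ?_ ?_ hx
    · rintro _ ⟨j, rfl⟩; exact hdv' j
    · simp
    · intro x y _ _ h1 h2; rw [mul_add]; exact dvd_add h1 h2
    · intro r x _ h1
      rw [smul_eq_mul, mul_left_comm]; exact h1.mul_left _
  have hs0 : s ≠ 0 := by rintro rfl; exact hsM M.zero_mem
  have hy : ∀ y ∈ clI star (contentIdeal f), ∃ t, t ∉ M ∧ a ∣ t * y := by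
    intro y hy
    rcases hV a y with h | ⟨t, htM, m, hm'⟩
    · exact h
    · by_cases hmM : m ∈ M
      · exfalso
        have ht0 : t ≠ 0 := by rintro rfl; exact htM M.zero_mem
        have hta : t * a ≠ 0 := mul_ne_zero ht0 ha0
        have hy0 : y ≠ 0 := by rintro rfl; apply hta; rw [hm', zero_mul]
        have hm0 : m ≠ 0 := by rintro rfl; apply hta; rw [hm', mul_zero]
        have hst : s * t ∈ clI star (Ideal.span {m}) := by
          refine clI_scale hs (content_ne_bot hf) (d := s * t) (y := y) (z := y)
            (mul_ne_zero hs0 ht0) hy0 hy ?_ (mul_comm _ _)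
          intro x hx
          obtain ⟨w, hw⟩ := hdvc x hx
          refine ⟨m * w, Ideal.mul_mem_right _ _ (Ideal.mem_span_singleton_self m), ?_⟩
          calc s * t * x = t * (s * x) := by ring
            _ = (t * a) * w := by rw [hw]; ring
            _ = y * (m * w) := by rw [hm']; ring
        apply hm hsM htM
        obtain ⟨⟨h0, hcl⟩, -⟩ := hM
        change clI (finTypeOp star) M = M at hcl
        rw [← hcl, mem_clf hs h0]
        exact ⟨Ideal.span {m}, by simpa using hm0, Submodule.fg_span_singleton m,
          by simpa [Ideal.span_le] using hmM, hst⟩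
      · exact ⟨m, hmM, t, by rw [mul_comm m, ← hm', mul_comm]⟩
  obtain ⟨t, htM, g1, hg1⟩ := dvd_poly g (fun j => hy _ (hfg (coeff_mem_content g j)))
  obtain ⟨f1, hf1⟩ : Polynomial.C a ∣ Polynomial.C s * f := by
    rw [Polynomial.C_dvd_iff_dvd_coeff]
    intro j
    rw [Polynomial.coeff_C_mul]
    exact hdv' j
  have hf1i : f1.coeff i = s := by
    have := congrArg (fun p => Polynomial.coeff p i) hf1
    simp only [Polynomial.coeff_C_mul] at this
    rw [← ha, mul_comm s] at this
    exact (mul_left_cancel₀ ha0 this).symm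
  refine ⟨Polynomial.C t * f1, ?_, Polynomial.C s * g1, ?_⟩
  · intro hmem
    have := Ideal.mem_map_C_iff.1 hmem i
    rw [Polynomial.coeff_C_mul, hf1i] at this
    exact hm htM hsM this
  · have hCa : Polynomial.C a ≠ 0 := by simpa using ha0
    apply mul_left_cancel₀ hCa
    calc Polynomial.C a * (Polynomial.C t * f1 * g)
        = (Polynomial.C a * f1) * (Polynomial.C t * g) := by ring
      _ = (Polynomial.C s * f) * (Polynomial.C a * g1) := by rw [hg1, ← hf1]
      _ = _ := by ring

lemma global_dvd (hP : StarPMD star) {f g : Polynomial D} (hf : f ≠ 0)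
    (hfg : contentIdeal g ≤ clI star (contentIdeal f)) :
    ∃ h ∈ nagataMonoid star, f ∣ h * g := by
  let H : Ideal (Polynomial D) := Submodule.comap (LinearMap.mulRight (Polynomial D) g)
    (Ideal.span {f})
  have hH : ∀ h, h ∈ H ↔ f ∣ h * g := by
    intro h
    simp [H, Ideal.mem_span_singleton]
  let I : Ideal D := ⨆ f : H, contentIdeal (f : Polynomial D)
  have hle : ∀ h ∈ H, contentIdeal h ≤ I := fun h hh =>
    le_iSup (fun f : H => contentIdeal (f : Polynomial D)) ⟨h, hh⟩
  have hfH : f ∈ H := (hH f).2 (dvd_mul_right _ _)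
  have hI : I ≠ ⊥ := ne_bot_of_le_ne_bot (content_ne_bot hf) (hle f hfH)
  have h1 : (1 : D) ∈ clI (finTypeOp star) I := by
    by_contra hcon
    obtain ⟨M, hIM, hM⟩ := exists_max hs hI hcon
    obtain ⟨h, hhM, hh⟩ := local_dvd hs hM hP hf hfg
    apply hhM
    rw [Ideal.mem_map_C_iff]
    exact content_le.1 ((hle h ((hH h).2 hh)).trans hIM)
  obtain ⟨F, hF0, hF, hFI, h1⟩ := (mem_clf hs hI).1 h1
  obtain ⟨h, hhH, hFh⟩ := exists_content H hF hFI
  have h0 : h ≠ 0 := by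
    rintro rfl
    apply hF0
    rw [eq_bot_iff]
    refine hFh.trans ?_
    rw [content_le]; simp
  exact ⟨h, nagata_mem hs h0 (clI_mono hs hF0 hFh h1), (hH h).1 hhH⟩

lemma noeth_fg (hN : StarNoetherian star) {I : Ideal D} (hI : I ≠ ⊥) :
    ∃ F : Ideal D, F ≠ ⊥ ∧ F.FG ∧ F ≤ I ∧ I ≤ clI star F := by
  have hcl : ∀ {F : Ideal D}, F ≠ ⊥ → QuasiStarIdeal star (clI star F) := by
    intro F hF
    have h1 := ne_bot_of_le_ne_bot hF (clI_le hs hF)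
    exact ⟨h1, le_antisymm (clI_le_of_le hs h1 hF le_rfl) (clI_le hs h1)⟩
  have hwf : WellFoundedGT {J : Ideal D // QuasiStarIdeal star J} := by
    rw [wellFoundedGT_iff_monotone_chain_condition]
    intro a
    obtain ⟨n, hn⟩ := hN ⟨fun n => (a n).1, fun i j hij => a.2 hij⟩ (fun n => (a n).2)
    exact ⟨n, fun m hm => Subtype.ext (hn m hm).symm⟩
  obtain ⟨y, hy, hy0⟩ := Submodule.exists_mem_ne_zero_of_ne_bot hI
  have hsp : Ideal.span {y} ≠ ⊥ := by simpa using hy0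
  obtain ⟨_, ⟨F, hF0, hF, hFI, hFe⟩, hmax⟩ := hwf.wf.has_min
    {J : {J : Ideal D // QuasiStarIdeal star J} |
      ∃ F : Ideal D, F ≠ ⊥ ∧ F.FG ∧ F ≤ I ∧ J.1 = clI star F}
    ⟨⟨_, hcl hsp⟩, Ideal.span {y}, hsp, Submodule.fg_span_singleton y,
      by simpa [Ideal.span_le] using hy, rfl⟩
  refine ⟨F, hF0, hF, hFI, ?_⟩
  intro x hx
  have hG0 : F ⊔ Ideal.span {x} ≠ ⊥ := ne_bot_of_le_ne_bot hF0 le_sup_left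
  have hle := clI_mono hs hF0 (J := F ⊔ Ideal.span {x}) le_sup_left
  have := hmax ⟨_, hcl hG0⟩ ⟨_, hG0, Submodule.FG.sup hF (Submodule.fg_span_singleton x),
    sup_le hFI (by simpa [Ideal.span_le] using hx), rfl⟩
  by_contra hxF
  apply this
  rw [← Subtype.coe_lt_coe, hFe]
  refine lt_of_le_of_ne hle ?_
  intro he
  apply hxF
  rw [he]
  exact clI_le hs hG0 (Ideal.mem_sup_right (Ideal.mem_span_singleton_self x))

omit hs in
lemma nagata_domain : IsDomain (NagataRing star) :=
  IsLocalization.isDomain_localization nagata_le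

lemma pid_of_starDedekind (h : StarDedekind star) : IsPrincipalIdealRing (NagataRing star) := by
  obtain ⟨hN, hP⟩ := h
  have := nagata_domain (star := star)
  refine ⟨fun J => ?_⟩
  let A : Ideal (Polynomial D) := J.comap (algebraMap (Polynomial D) (NagataRing star))
  let I : Ideal D := ⨆ f : A, contentIdeal (f : Polynomial D)
  have hle : ∀ h ∈ A, contentIdeal h ≤ I := fun h hh =>
    le_iSup (fun f : A => contentIdeal (f : Polynomial D)) ⟨h, hh⟩
  by_cases hI : I = ⊥
  · refine ⟨0, ?_⟩
    rw [← Ideal.span, Ideal.span_singleton_eq_bot.2 rfl, eq_bot_iff]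
    intro x hx
    obtain ⟨⟨g, n⟩, hg⟩ := IsLocalization.surj (nagataMonoid star) x
    have hgA : g ∈ A := by
      change algebraMap _ _ g ∈ J
      rw [← hg]; exact J.mul_mem_right _ hx
    have : g = 0 := by
      by_contra hg0
      exact content_ne_bot hg0 (le_bot_iff.1 ((hle g hgA).trans hI.le))
    simp only [this, map_zero] at hg
    have hu := IsLocalization.map_units (NagataRing star) n
    rw [hu.mul_left_eq_zero] at hg
    simpa using hg
  · obtain ⟨F, hF0, hF, hFI, hIF⟩ := noeth_fg hs hN hI
    obtain ⟨f, hfA, hFf⟩ := exists_content A hF hFI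
    have hf0 : f ≠ 0 := by
      rintro rfl
      apply hF0
      rw [eq_bot_iff]
      refine hFf.trans ?_
      rw [content_le]; simp
    refine ⟨algebraMap _ _ f, ?_⟩
    rw [← Ideal.span]
    apply le_antisymm
    · intro x hx
      obtain ⟨⟨g, n⟩, hg⟩ := IsLocalization.surj (nagataMonoid star) x
      have hgA : g ∈ A := by
        change algebraMap _ _ g ∈ J
        rw [← hg]; exact J.mul_mem_right _ hx
      obtain ⟨h, hhN, hdv⟩ := global_dvd hs hP hf0
        ((hle g hgA).trans (hIF.trans (clI_mono hs hF0 hFf)))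
      have hu := IsLocalization.map_units (NagataRing star) n
      have hv := IsLocalization.map_units (NagataRing star) (⟨h, hhN⟩ : nagataMonoid star)
      rw [Ideal.mem_span_singleton, ← hu.dvd_mul_right, hg, ← hv.dvd_mul_left, ← map_mul]
      exact map_dvd _ hdv
    · rw [Ideal.span_singleton_le_iff_mem]
      exact hfA

lemma starNoetherian_of (h : IsNoetherianRing (NagataRing star)) : StarNoetherian star := by
  intro c hc
  let φ : D →+* NagataRing star :=
    (algebraMap (Polynomial D) (NagataRing star)).comp Polynomial.C
  have hinj : Function.Injective (algebraMap (Polynomial D) (NagataRing star)) :=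
    IsLocalization.injective _ (nagata_le (star := star))
  obtain ⟨n, hn⟩ := monotone_stabilizes_iff_noetherian.2 h
    ⟨fun n => (c n).map φ, fun i j hij => Ideal.map_mono (c.2 hij)⟩
  refine ⟨n, fun m hm => le_antisymm ?_ (c.2 hm)⟩
  intro d hd
  have h1 : φ d ∈ (c n).map φ := by
    have : (c n).map φ = (c m).map φ := hn m hm
    rw [this]
    exact Ideal.mem_map_of_mem φ hd
  rw [← Ideal.map_map, IsLocalization.mem_map_algebraMap_iff (nagataMonoid star)] at h1
  obtain ⟨⟨⟨g, hg⟩, ⟨h, hh⟩⟩, he⟩ := h1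
  simp only [φ, RingHom.comp_apply] at he
  rw [← map_mul] at he
  have he := hinj he
  obtain ⟨h0, hcl⟩ := hc n
  change clI star (c n) = c n at hcl
  by_cases hd0 : d = 0
  · rw [hd0]; exact Ideal.zero_mem _
  rw [← hcl]
  refine clI_scale hs (content_ne_bot (nonZeroDivisors.ne_zero (nagata_le hh)))
    (d := d) (y := 1) (z := 1) hd0 one_ne_zero (nagata_one hs hh) ?_ (by ring)
  intro x hx
  refine ⟨d * x, ?_, (one_mul _).symm⟩
  have : contentIdeal h ≤ Submodule.comap (LinearMap.mulLeft D d) (c n) := by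
    rw [content_le]
    intro i
    change d * h.coeff i ∈ c n
    rw [← Polynomial.coeff_C_mul, he]
    exact Ideal.mem_map_C_iff.1 hg i
  exact this hx

lemma starPMD_of (h : IsDedekindDomain (NagataRing star)) : StarPMD star := by
  intro M hMp hM
  rw [val_iff]
  have hinj : Function.Injective (algebraMap (Polynomial D) (NagataRing star)) :=
    IsLocalization.injective _ (nagata_le (star := star))
  have hQ : (Ideal.map (Polynomial.C : D →+* _) M).IsPrime := Ideal.isPrime_map_C_of_isPrime
  have hdisj : Disjoint (nagataMonoid star : Set (Polynomial D))
      (Ideal.map (Polynomial.C : D →+* _) M : Ideal (Polynomial D)) := by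
    rw [Set.disjoint_left]
    intro x hx
    exact nagata_notMem hs hM hx
  set Q := Ideal.map (Polynomial.C : D →+* Polynomial D) M with hQd
  have hPp := IsLocalization.isPrime_of_isPrime_disjoint (nagataMonoid star) (NagataRing star)
    Q hQ hdisj
  set P := Q.map (algebraMap (Polynomial D) (NagataRing star)) with hPd
  have hP0 : P ≠ ⊥ := by
    intro h0
    apply hM.1.1
    rw [eq_bot_iff]
    intro x hx
    have : algebraMap (Polynomial D) (NagataRing star) (Polynomial.C x) ∈ P :=
      Ideal.mem_map_of_mem _ (Ideal.mem_map_of_mem _ hx)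
    rw [h0, Ideal.mem_bot] at this
    rw [map_eq_zero_iff _ hinj] at this
    simpa using this
  have hdvr := IsLocalization.AtPrime.isDiscreteValuationRing_of_dedekind_domain
    (NagataRing star) hP0 (Localization.AtPrime P)
  have hv := (val_iff P).1 ⟨inferInstance, inferInstance⟩
  have key : ∀ a b : D, (∃ s, s ∉ P ∧ algebraMap (Polynomial D) (NagataRing star)
      (Polynomial.C a) ∣ s * algebraMap (Polynomial D) (NagataRing star) (Polynomial.C b)) →
      ∃ s, s ∉ M ∧ a ∣ s * b := by
    rintro a b ⟨s, hsP, r, hr⟩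
    obtain ⟨⟨h, n⟩, hh⟩ := IsLocalization.surj (nagataMonoid star) s
    obtain ⟨⟨g, n'⟩, hg⟩ := IsLocalization.surj (nagataMonoid star) r
    simp only at hh hg
    have e : h * n' * Polynomial.C b = Polynomial.C a * (g * n) := by
      apply hinj
      simp only [map_mul]
      rw [← hh, ← hg]
      linear_combination (algebraMap _ (NagataRing star) (n : Polynomial D)) *
        (algebraMap _ (NagataRing star) (n' : Polynomial D)) * hr
    have hhQ : h ∉ Q := by
      intro hq
      have h1 := Ideal.mem_map_of_mem (algebraMap (Polynomial D) (NagataRing star)) hq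
      rw [← hh] at h1
      have hu := IsLocalization.map_units (NagataRing star) n
      exact hsP ((Ideal.mul_unit_mem_iff_mem _ hu).1 h1)
    have hnQ : h * n' ∉ Q := fun hq =>
      (hQ.mem_or_mem hq).elim hhQ (nagata_notMem hs hM n'.2)
    rw [hQd, Ideal.mem_map_C_iff] at hnQ
    push Not at hnQ
    obtain ⟨i, hi⟩ := hnQ
    refine ⟨_, hi, (g * n).coeff i, ?_⟩
    rw [← Polynomial.coeff_mul_C, e, Polynomial.coeff_C_mul]
  intro a b
  exact (hv _ _).imp (key a b) (key b a)

end Helpers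

section Statement

variable {D : Type*} [CommRing D] [IsDomain D]
variable {K : Type*} [Field K] [Algebra D K] [IsFractionRing D K]

/-- `D` an integral domain, `⋆` a semistar operation. TFAE:
(1) `D` is a ⋆-Dedekind domain; (2) the Nagata ring `Na(D,⋆)` is a principal ideal
domain; (3) `Na(D,⋆)` is a Dedekind domain. -/
theorem starDedekind_iff_nagataRing_PID_iff_dedekind
    (star : Submodule D K → Submodule D K) (hstar : IsSemistarOperation star) :
    (StarDedekind star ↔
      (IsDomain (NagataRing star) ∧ IsPrincipalIdealRing (NagataRing star))) ∧
    (StarDedekind star ↔ IsDedekindDomain (NagataRing star)) := by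
  have h31 : IsDedekindDomain (NagataRing star) → StarDedekind star := fun h =>
    ⟨starNoetherian_of hstar inferInstance, starPMD_of hstar h⟩
  have h12 : StarDedekind star →
      (IsDomain (NagataRing star) ∧ IsPrincipalIdealRing (NagataRing star)) := fun h =>
    ⟨nagata_domain, pid_of_starDedekind hstar h⟩
  have h23 : (IsDomain (NagataRing star) ∧ IsPrincipalIdealRing (NagataRing star)) →
      IsDedekindDomain (NagataRing star) := by
    rintro ⟨h1, h2⟩
    infer_instance
  exact ⟨⟨h12, fun h => h31 (h23 h)⟩, ⟨fun h => h23 (h12 h), h31⟩⟩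

end Statement
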